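/- Let 𝒜 be an additive Hom-finite Krull–Schmidt category (every object is a finite direct sum of objects with local endomorphism rings) and let α = (i : A ⟶ B, d : B ⟶ C) be an almost split (Auslander–Reiten) sequence in 𝒜. Let 𝓔_α be the class of all kernel–cokernel pairs isomorphic to a direct sum σ ⊕ τ where σ is a split kernel–cokernel pair and τ is a finite direct sum of copies of α. Then 𝓔_α is a weakly exact structure on 𝒜 and it is an atom in the lattice of weakly exact structures on 𝒜: any weakly exact structure 𝒲 with 𝒲 ⊆ 𝓔_α equals either the split structure 𝓔_min or 𝓔_α. -/

import Mathlib

/-!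
The pairs in `𝓔_α` arise from split pairs by isomorphisms and by adding copies of `α = (i, d)`, so
the closure properties are proved by induction. Consider the pushout of `α ⊕ σ` along
`t : A ⊞ T ⟶ A'`. If the restriction of `t` to `A` is not a split mono, it factors through `i`;
subtracting the factorization makes `t` vanish on `A`, and the pushout is that of `σ` with a split
summand `Z` added. If it is a split mono, then `A` is a summand of `A'`. No endomorphism `u` of `A`
makes `u ≫ i` a split mono, so every `u ≫ i` factors through `i`; hence elementary operations turn
`t` into `𝟙 A ⊕ t'`, and the pushout is `α` plus that of `σ` along `t'`. Pullbacks are dual.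

A non-split pair in `𝓔_α` has the form `α ⊕ σ`; pushing it out along the projection onto `A` and
pulling the result back along the inclusion of `Z` isolates `α`, which generates `𝓔_α`.

Splitting `A` off `A'` needs a cokernel of the inclusion. By Krull–Schmidt, one component of a split
mono out of an object with local endomorphism ring is invertible, which provides that cokernel.
-/

open CategoryTheory CategoryTheory.Limits ZeroObject

universe w v u

namespace WeaklyExactPaper

section Preamble

variable {C : Type u} [Category.{v} C] [Preadditive C] [HasZeroObject C] [HasBinaryBiproducts C]

/-- `(i, d)` is a kernel–cokernel pair: `i` is a kernel of `d` and `d` is a cokernel of `i`. -/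
structure IsKernelCokernelPair {A B Z : C} (i : A ⟶ B) (d : B ⟶ Z) : Prop where
  w : i ≫ d = 0
  isKernel : Nonempty (IsLimit (KernelFork.ofι i w))
  isCokernel : Nonempty (IsColimit (CokernelCofork.ofπ d w))

/-- Isomorphism of composable pairs `(i, d) ≅ (i', d')`. -/
def PairIso {A B Z A' B' Z' : C} (i : A ⟶ B) (d : B ⟶ Z) (i' : A' ⟶ B') (d' : B' ⟶ Z') : Prop :=
  ∃ (eA : A ≅ A') (eB : B ≅ B') (eZ : Z ≅ Z'),
    i ≫ eB.hom = eA.hom ≫ i' ∧ d ≫ eZ.hom = eB.hom ≫ d'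

/-- `f` is a kernel of some morphism. -/
def IsSomeKernel {A B : C} (f : A ⟶ B) : Prop :=
  ∃ (Z : C) (g : B ⟶ Z) (w : f ≫ g = 0), Nonempty (IsLimit (KernelFork.ofι f w))

/-- `g` is a cokernel of some morphism. -/
def IsSomeCokernel {B Z : C} (g : B ⟶ Z) : Prop :=
  ∃ (A : C) (f : A ⟶ B) (w : f ≫ g = 0), Nonempty (IsColimit (CokernelCofork.ofπ g w))

/-- `f` admits a cokernel. -/
def AdmitsCokernel {A B : C} (f : A ⟶ B) : Prop :=
  ∃ (Z : C) (g : B ⟶ Z) (w : f ≫ g = 0), Nonempty (IsColimit (CokernelCofork.ofπ g w))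

/-- `g` admits a kernel. -/
def AdmitsKernel {B Z : C} (g : B ⟶ Z) : Prop :=
  ∃ (A : C) (f : A ⟶ B) (w : f ≫ g = 0), Nonempty (IsLimit (KernelFork.ofι f w))

/-- A weakly exact structure on an additive category: a class of kernel–cokernel pairs,
closed under isomorphisms of composable pairs and binary direct sums, containing the pairs
`(1_X, X ⟶ 0)` and `(0 ⟶ X, 1_X)`, and satisfying the pushout axiom (E2) and the
pullback axiom (E2)ᵒᵖ. -/
structure WeaklyExactStructure (C : Type u) [Category.{v} C] [Preadditive C]
    [HasZeroObject C] [HasBinaryBiproducts C] where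
  W : ∀ ⦃A B Z : C⦄, (A ⟶ B) → (B ⟶ Z) → Prop
  kc_of_mem : ∀ {A B Z : C} {i : A ⟶ B} {d : B ⟶ Z}, W i d → IsKernelCokernelPair i d
  iso_closed : ∀ {A B Z A' B' Z' : C} {i : A ⟶ B} {d : B ⟶ Z} {i' : A' ⟶ B'} {d' : B' ⟶ Z'},
    W i d → PairIso i d i' d' → W i' d'
  sum_mem : ∀ {A₁ B₁ Z₁ A₂ B₂ Z₂ : C} {i₁ : A₁ ⟶ B₁} {d₁ : B₁ ⟶ Z₁} {i₂ : A₂ ⟶ B₂}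
    {d₂ : B₂ ⟶ Z₂}, W i₁ d₁ → W i₂ d₂ → W (biprod.map i₁ i₂) (biprod.map d₁ d₂)
  id_zero_mem : ∀ X : C, W (𝟙 X) (0 : X ⟶ (0 : C))
  zero_id_mem : ∀ X : C, W (0 : (0 : C) ⟶ X) (𝟙 X)
  pushout_mem : ∀ {A B Z A' : C} {i : A ⟶ B} {d : B ⟶ Z}, W i d → ∀ t : A ⟶ A',
    ∃ (S : C) (g : B ⟶ S) (i' : A' ⟶ S), IsPushout i t g i' ∧ ∃ (Z' : C) (d' : S ⟶ Z'), W i' d'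
  pullback_mem : ∀ {A B Z D : C} {i : A ⟶ B} {d : B ⟶ Z}, W i d → ∀ t : D ⟶ Z,
    ∃ (P : C) (p : P ⟶ B) (q : P ⟶ D), IsPullback p q d t ∧ ∃ (A'' : C) (i'' : A'' ⟶ P), W i'' q

/-- `i` is an admissible monic of `𝒲`. -/
def AdmissibleMonic (𝒲 : WeaklyExactStructure C) {A B : C} (i : A ⟶ B) : Prop :=
  ∃ (Z : C) (d : B ⟶ Z), 𝒲.W i d

/-- `d` is an admissible epic of `𝒲`. -/
def AdmissibleEpic (𝒲 : WeaklyExactStructure C) {B Z : C} (d : B ⟶ Z) : Prop :=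
  ∃ (A : C) (i : A ⟶ B), 𝒲.W i d

/-- `(i, d)` is a split kernel–cokernel pair. -/
def IsSplitPair {A B Z : C} (i : A ⟶ B) (d : B ⟶ Z) : Prop :=
  ∃ (X Y : C), PairIso (biprod.inl : X ⟶ X ⊞ Y) (biprod.snd : X ⊞ Y ⟶ Y) i d

end Preamble

section Statement

variable {C : Type u} [Category.{v} C] [Preadditive C] [HasZeroObject C] [HasBinaryBiproducts C] [HasFiniteBiproducts C]

/-- `X` is indecomposable: nonzero, and in any direct sum decomposition one summand is zero. -/
def Indecomposable' (X : C) : Prop :=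
  ¬ IsZero X ∧ ∀ U V : C, Nonempty (X ≅ U ⊞ V) → IsZero U ∨ IsZero V

/-- `(i, d)` is an almost split (Auslander–Reiten) sequence: a non-split kernel–cokernel pair
with indecomposable end terms such that every non-split-mono out of `A` factors through `i`
and every non-split-epi into `Z` factors through `d`. -/
def IsAlmostSplit {A B Z : C} (i : A ⟶ B) (d : B ⟶ Z) : Prop :=
  IsKernelCokernelPair i d ∧ ¬ IsSplitPair i d ∧
  Indecomposable' A ∧ Indecomposable' Z ∧
  (∀ {X : C} (f : A ⟶ X), ¬ (∃ r : X ⟶ A, f ≫ r = 𝟙 A) → ∃ h : B ⟶ X, i ≫ h = f) ∧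
  (∀ {X : C} (f : X ⟶ Z), ¬ (∃ s : Z ⟶ X, s ≫ f = 𝟙 Z) → ∃ h : X ⟶ B, h ≫ d = f)

/-- `(i', d')` is isomorphic to the direct sum of a split pair and of `n` copies of the
pair `(i, d)`. -/
def InEAlpha {A B Z : C} (i : A ⟶ B) (d : B ⟶ Z)
    {A' B' Z' : C} (i' : A' ⟶ B') (d' : B' ⟶ Z') : Prop :=
  ∃ (X Y : C) (n : ℕ), PairIso
    (biprod.map (biprod.inl : X ⟶ X ⊞ Y) (biproduct.map (fun _ : Fin n => i)))
    (biprod.map (biprod.snd : X ⊞ Y ⟶ Y) (biproduct.map (fun _ : Fin n => d)))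
    i' d'

section PairIso

variable {𝒜 : Type*} [Category 𝒜] {A B Z A' B' Z' A'' B'' Z'' : 𝒜} {i : A ⟶ B} {d : B ⟶ Z}
  {i' : A' ⟶ B'} {d' : B' ⟶ Z'} {i'' : A'' ⟶ B''} {d'' : B'' ⟶ Z''}

lemma PairIso.refl (i : A ⟶ B) (d : B ⟶ Z) : PairIso i d i d :=
  ⟨Iso.refl A, Iso.refl B, Iso.refl Z, by simp, by simp⟩

lemma PairIso.symm : PairIso i d i' d' → PairIso i' d' i d := by
  rintro ⟨eA, eB, eZ, hi, hd⟩
  exact ⟨eA.symm, eB.symm, eZ.symm, by simp [← cancel_epi eA.hom, ← reassoc_of% hi],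
    by simp [← cancel_epi eB.hom, ← reassoc_of% hd]⟩

lemma PairIso.trans : PairIso i d i' d' → PairIso i' d' i'' d'' → PairIso i d i'' d'' := by
  rintro ⟨eA, eB, eZ, hi, hd⟩ ⟨fA, fB, fZ, hi', hd'⟩
  exact ⟨eA ≪≫ fA, eB ≪≫ fB, eZ ≪≫ fZ, by simp [reassoc_of% hi, hi'],
    by simp [reassoc_of% hd, hd']⟩

lemma PairIso.op : PairIso i d i' d' → PairIso d.op i.op d'.op i'.op := by
  rintro ⟨eA, eB, eZ, hi, hd⟩
  refine ⟨eZ.symm.op, eB.symm.op, eA.symm.op, Quiver.Hom.unop_inj ?_, Quiver.Hom.unop_inj ?_⟩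
  · simp [← cancel_epi eB.hom, ← reassoc_of% hd]
  · simp [← cancel_epi eA.hom, ← reassoc_of% hi]

lemma PairIso.unop {A B Z A' B' Z' : 𝒜ᵒᵖ} {i : A ⟶ B} {d : B ⟶ Z} {i' : A' ⟶ B'}
    {d' : B' ⟶ Z'} : PairIso i d i' d' → PairIso d.unop i.unop d'.unop i'.unop := by
  rintro ⟨eA, eB, eZ, hi, hd⟩
  refine ⟨eZ.symm.unop, eB.symm.unop, eA.symm.unop, Quiver.Hom.op_inj ?_, Quiver.Hom.op_inj ?_⟩
  · simp [← cancel_epi eB.hom, ← reassoc_of% hd]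
  · simp [← cancel_epi eA.hom, ← reassoc_of% hi]

section Biprod

variable [HasZeroMorphisms 𝒜] [HasBinaryBiproducts 𝒜]

variable {A₁ B₁ Z₁ A₂ B₂ Z₂ A₃ B₃ Z₃ A₁' B₁' Z₁' A₂' B₂' Z₂' : 𝒜} {i₁ : A₁ ⟶ B₁} {d₁ : B₁ ⟶ Z₁}
  {i₂ : A₂ ⟶ B₂} {d₂ : B₂ ⟶ Z₂} {i₃ : A₃ ⟶ B₃} {d₃ : B₃ ⟶ Z₃} {i₁' : A₁' ⟶ B₁'} {d₁' : B₁' ⟶ Z₁'}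
  {i₂' : A₂' ⟶ B₂'} {d₂' : B₂' ⟶ Z₂'}

lemma PairIso.biprodMap :
    PairIso i₁ d₁ i₁' d₁' → PairIso i₂ d₂ i₂' d₂' →
    PairIso (biprod.map i₁ i₂) (biprod.map d₁ d₂) (biprod.map i₁' i₂') (biprod.map d₁' d₂') := by
  rintro ⟨eA, eB, eZ, hi, hd⟩ ⟨fA, fB, fZ, hi', hd'⟩
  exact ⟨biprod.mapIso eA fA, biprod.mapIso eB fB, biprod.mapIso eZ fZ,
    by ext <;> simp [hi, hi'], by ext <;> simp [hd, hd']⟩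

lemma PairIso.biprodComm (i₁ : A₁ ⟶ B₁) (d₁ : B₁ ⟶ Z₁) (i₂ : A₂ ⟶ B₂)
    (d₂ : B₂ ⟶ Z₂) :
    PairIso (biprod.map i₁ i₂) (biprod.map d₁ d₂) (biprod.map i₂ i₁) (biprod.map d₂ d₁) :=
  ⟨biprod.braiding _ _, biprod.braiding _ _, biprod.braiding _ _, by ext <;> simp,
    by ext <;> simp⟩

lemma PairIso.biprodAssoc (i₁ : A₁ ⟶ B₁) (d₁ : B₁ ⟶ Z₁) (i₂ : A₂ ⟶ B₂)
    (d₂ : B₂ ⟶ Z₂) (i₃ : A₃ ⟶ B₃) (d₃ : B₃ ⟶ Z₃) :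
    PairIso (biprod.map (biprod.map i₁ i₂) i₃) (biprod.map (biprod.map d₁ d₂) d₃)
      (biprod.map i₁ (biprod.map i₂ i₃)) (biprod.map d₁ (biprod.map d₂ d₃)) :=
  ⟨biprod.associator _ _ _, biprod.associator _ _ _, biprod.associator _ _ _,
    by ext <;> simp, by ext <;> simp⟩

lemma PairIso.biprodLeftComm (i₁ : A₁ ⟶ B₁) (d₁ : B₁ ⟶ Z₁) (i₂ : A₂ ⟶ B₂)
    (d₂ : B₂ ⟶ Z₂) (i₃ : A₃ ⟶ B₃) (d₃ : B₃ ⟶ Z₃) :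
    PairIso (biprod.map i₁ (biprod.map i₂ i₃)) (biprod.map d₁ (biprod.map d₂ d₃))
      (biprod.map i₂ (biprod.map i₁ i₃)) (biprod.map d₂ (biprod.map d₁ d₃)) :=
  (biprodAssoc ..).symm.trans (((biprodComm ..).biprodMap (refl _ _)).trans (biprodAssoc ..))

lemma PairIso.biprodZero (i₁ : A₁ ⟶ B₁) (d₁ : B₁ ⟶ Z₁) (i₂ : A₂ ⟶ B₂)
    (d₂ : B₂ ⟶ Z₂) (hA : IsZero A₂) (hB : IsZero B₂)
    (hZ : IsZero Z₂) : PairIso i₁ d₁ (biprod.map i₁ i₂) (biprod.map d₁ d₂) :=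
  ⟨isoBiprodZero hA, isoBiprodZero hB, isoBiprodZero hZ, by simp [isoBiprodZero],
    by simp [isoBiprodZero]⟩

lemma PairIso.zeroBiprod {O : 𝒜} (X : 𝒜) (i : A ⟶ B) (d : B ⟶ Z) (hO : IsZero O) :
    PairIso (biprod.map (0 : O ⟶ X) i) (biprod.map (𝟙 X) d) (i ≫ biprod.inr)
      (biprod.map (𝟙 X) d) :=
  ⟨(isoZeroBiprod hO).symm, Iso.refl _, Iso.refl _,
    by simp [isoZeroBiprod, biprod.hom_ext_iff], by simp⟩

end Biprod

end PairIso

section Op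

variable {𝒜 : Type*} [Category 𝒜] [Preadditive 𝒜] [HasBinaryBiproducts 𝒜]

/-- Direct sums are self-dual; this compares the chosen biproducts of `𝒜` and `𝒜ᵒᵖ`. -/
noncomputable def opBiprodIso (X Y : 𝒜) :
    Opposite.op (X ⊞ Y) ≅ Opposite.op X ⊞ Opposite.op Y where
  hom := biprod.lift biprod.inl.op biprod.inr.op
  inv := biprod.desc biprod.fst.op biprod.snd.op
  hom_inv_id := by
    rw [biprod.lift_desc, ← op_comp, ← op_comp, ← op_add, biprod.total, op_id]
  inv_hom_id := by
    ext <;> simp [← op_comp]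

lemma opBiprodIso_inv_naturality {X Y X' Y' : 𝒜} (f : X ⟶ X') (g : Y ⟶ Y') :
    biprod.map f.op g.op ≫ (opBiprodIso X Y).inv =
      (opBiprodIso X' Y').inv ≫ (biprod.map f g).op := by
  ext <;> simp [opBiprodIso, ← op_comp]

lemma PairIso.op_biprodMap {A₁ B₁ Z₁ A₂ B₂ Z₂ : 𝒜} (i₁ : A₁ ⟶ B₁) (d₁ : B₁ ⟶ Z₁)
    (i₂ : A₂ ⟶ B₂) (d₂ : B₂ ⟶ Z₂) :
    PairIso (biprod.map d₁.op d₂.op) (biprod.map i₁.op i₂.op)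
      (biprod.map d₁ d₂).op (biprod.map i₁ i₂).op :=
  ⟨(opBiprodIso _ _).symm, (opBiprodIso _ _).symm, (opBiprodIso _ _).symm,
    opBiprodIso_inv_naturality _ _, opBiprodIso_inv_naturality _ _⟩

lemma PairIso.unop_biprodMap {A₁ B₁ Z₁ A₂ B₂ Z₂ : 𝒜ᵒᵖ} (i₁ : A₁ ⟶ B₁) (d₁ : B₁ ⟶ Z₁)
    (i₂ : A₂ ⟶ B₂) (d₂ : B₂ ⟶ Z₂) :
    PairIso (biprod.map d₁.unop d₂.unop) (biprod.map i₁.unop i₂.unop)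
      (biprod.map d₁ d₂).unop (biprod.map i₁ i₂).unop :=
  (PairIso.op_biprodMap d₁.unop i₁.unop d₂.unop i₂.unop).unop.symm

end Op

section KernelCokernelPair

variable {𝒜 : Type*} [Category 𝒜] [Preadditive 𝒜] {A B Z A' B' Z' : 𝒜} {i : A ⟶ B} {d : B ⟶ Z}
  {i' : A' ⟶ B'} {d' : B' ⟶ Z'}

namespace IsKernelCokernelPair

lemma mono (h : IsKernelCokernelPair i d) : Mono i :=
  mono_of_isLimit_fork h.isKernel.some

lemma epi (h : IsKernelCokernelPair i d) : Epi d :=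
  epi_of_isColimit_cofork h.isCokernel.some

lemma exists_lift (h : IsKernelCokernelPair i d) {X : 𝒜} (f : X ⟶ B) (hf : f ≫ d = 0) :
    ∃ g, g ≫ i = f :=
  ⟨_, (KernelFork.IsLimit.lift' h.isKernel.some f hf).2⟩

lemma exists_desc (h : IsKernelCokernelPair i d) {X : 𝒜} (f : B ⟶ X) (hf : i ≫ f = 0) :
    ∃ g, d ≫ g = f :=
  ⟨_, (CokernelCofork.IsColimit.desc' h.isCokernel.some f hf).2⟩

lemma of_exists_lift_desc [Mono i] [Epi d] (w : i ≫ d = 0)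
    (lift : ∀ {X : 𝒜} (f : X ⟶ B), f ≫ d = 0 → ∃ g, g ≫ i = f)
    (desc : ∀ {X : 𝒜} (f : B ⟶ X), i ≫ f = 0 → ∃ g, d ≫ g = f) :
    IsKernelCokernelPair i d where
  w := w
  isKernel := ⟨KernelFork.IsLimit.ofι' _ _ fun f hf => ⟨_, (lift f hf).choose_spec⟩⟩
  isCokernel := ⟨CokernelCofork.IsColimit.ofπ' _ _ fun f hf => ⟨_, (desc f hf).choose_spec⟩⟩

lemma of_pairIso (h : IsKernelCokernelPair i d) : PairIso i d i' d' →
    IsKernelCokernelPair i' d' := by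
  rintro ⟨eA, eB, eZ, hi, hd⟩
  obtain rfl : i' = eA.inv ≫ i ≫ eB.hom := by simp [hi]
  obtain rfl : d' = eB.inv ≫ d ≫ eZ.hom := by simp [hd]
  have := h.mono
  have := h.epi
  refine of_exists_lift_desc (by simp [reassoc_of% h.w]) (fun f hf => ?_) (fun f hf => ?_)
  · obtain ⟨g, hg⟩ := h.exists_lift (f ≫ eB.inv) (by simpa [← cancel_mono eZ.hom] using hf)
    exact ⟨g ≫ eA.hom, by simp [reassoc_of% hg]⟩
  · obtain ⟨g, hg⟩ := h.exists_desc (eB.hom ≫ f) (by simpa using hf)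
    exact ⟨eZ.inv ≫ g, by simp [hg]⟩

lemma op (h : IsKernelCokernelPair i d) : IsKernelCokernelPair d.op i.op := by
  have := h.mono
  have := h.epi
  refine of_exists_lift_desc (by rw [← op_comp, h.w, op_zero]) (fun f hf => ?_) (fun f hf => ?_)
  · obtain ⟨g, hg⟩ := h.exists_desc f.unop (Quiver.Hom.op_inj hf)
    exact ⟨g.op, Quiver.Hom.unop_inj hg⟩
  · obtain ⟨g, hg⟩ := h.exists_lift f.unop (Quiver.Hom.op_inj hf)
    exact ⟨g.op, Quiver.Hom.unop_inj hg⟩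

lemma unop {A B Z : 𝒜ᵒᵖ} {i : A ⟶ B} {d : B ⟶ Z} (h : IsKernelCokernelPair i d) :
    IsKernelCokernelPair d.unop i.unop := by
  have := h.mono
  have := h.epi
  refine of_exists_lift_desc (by rw [← unop_comp, h.w, unop_zero]) (fun f hf => ?_)
    (fun f hf => ?_)
  · obtain ⟨g, hg⟩ := h.exists_desc f.op (Quiver.Hom.unop_inj hf)
    exact ⟨g.unop, Quiver.Hom.op_inj hg⟩
  · obtain ⟨g, hg⟩ := h.exists_lift f.op (Quiver.Hom.unop_inj hf)
    exact ⟨g.unop, Quiver.Hom.op_inj hg⟩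

lemma biprodMap [HasBinaryBiproducts 𝒜] (h : IsKernelCokernelPair i d)
    (h' : IsKernelCokernelPair i' d') :
    IsKernelCokernelPair (biprod.map i i') (biprod.map d d') := by
  have := h.mono
  have := h'.mono
  have := h.epi
  have := h'.epi
  refine of_exists_lift_desc (by ext <;> simp [h.w, h'.w]) (fun f hf => ?_) (fun f hf => ?_)
  · obtain ⟨g, hg⟩ := h.exists_lift (f ≫ biprod.fst) (by simpa using hf =≫ biprod.fst)
    obtain ⟨g', hg'⟩ := h'.exists_lift (f ≫ biprod.snd) (by simpa using hf =≫ biprod.snd)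
    exact ⟨biprod.lift g g', by ext <;> simp [hg, hg']⟩
  · obtain ⟨g, hg⟩ := h.exists_desc (biprod.inl ≫ f) (by simpa using biprod.inl ≫= hf)
    obtain ⟨g', hg'⟩ := h'.exists_desc (biprod.inr ≫ f) (by simpa using biprod.inr ≫= hf)
    exact ⟨biprod.desc g g', by ext <;> simp [hg, hg']⟩

lemma inl_snd [HasBinaryBiproducts 𝒜] (X Y : 𝒜) :
    IsKernelCokernelPair (biprod.inl : X ⟶ X ⊞ Y) (biprod.snd : X ⊞ Y ⟶ Y) :=
  of_exists_lift_desc (by simp)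
    (fun f hf => ⟨f ≫ biprod.fst, by ext <;> simp [hf]⟩)
    (fun f hf => ⟨biprod.inr ≫ f, by ext <;> simp [hf]⟩)

lemma pairIso_of_iso_left (h : IsKernelCokernelPair i d) (h' : IsKernelCokernelPair i' d')
    (eA : A ≅ A') (eB : B ≅ B') (w : i ≫ eB.hom = eA.hom ≫ i') : PairIso i d i' d' := by
  have := h.epi
  have := h'.epi
  have w' : i' ≫ eB.inv = eA.inv ≫ i := by simp [← cancel_epi eA.hom, ← reassoc_of% w]
  obtain ⟨f, hf⟩ := h.exists_desc (eB.hom ≫ d') (by simp [reassoc_of% w, h'.w])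
  obtain ⟨g, hg⟩ := h'.exists_desc (eB.inv ≫ d) (by simp [reassoc_of% w', h.w])
  exact ⟨eA, eB, ⟨f, g, by simp [← cancel_epi d, reassoc_of% hf, hg],
    by simp [← cancel_epi d', reassoc_of% hg, hf]⟩, w, hf⟩

lemma pairIso_of_iso_right (h : IsKernelCokernelPair i d) (h' : IsKernelCokernelPair i' d')
    (eB : B ≅ B') (eZ : Z ≅ Z') (w : d ≫ eZ.hom = eB.hom ≫ d') : PairIso i d i' d' := by
  have := h.mono
  have := h'.mono
  have w' : eB.inv ≫ d = d' ≫ eZ.inv := by simp [← cancel_mono eZ.hom, w]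
  obtain ⟨f, hf⟩ := h'.exists_lift (i ≫ eB.hom) (by simp [← w, reassoc_of% h.w])
  obtain ⟨g, hg⟩ := h.exists_lift (i' ≫ eB.inv) (by simp [w', reassoc_of% h'.w])
  exact ⟨⟨f, g, by simp [← cancel_mono i, hg, reassoc_of% hf],
    by simp [← cancel_mono i', hf, reassoc_of% hg]⟩,
    eB, eZ, hf.symm, w⟩

end IsKernelCokernelPair

end KernelCokernelPair

section Pushout

variable {𝒜 : Type*} [Category 𝒜] [Preadditive 𝒜] {A B A' S : 𝒜} {i : A ⟶ B} {t : A ⟶ A'}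
  {g : B ⟶ S} {i' : A' ⟶ S}

lemma isPushout_of_exists_desc (w : i ≫ g = t ≫ i')
    (desc : ∀ {X : 𝒜} (b : B ⟶ X) (a : A' ⟶ X), i ≫ b = t ≫ a → ∃ l, g ≫ l = b ∧ i' ≫ l = a)
    (eq_zero : ∀ {X : 𝒜} (l : S ⟶ X), g ≫ l = 0 → i' ≫ l = 0 → l = 0) :
    IsPushout i t g i' :=
  ⟨⟨w⟩, ⟨PushoutCocone.IsColimit.mk w (fun s => (desc s.inl s.inr s.condition).choose)
    (fun s => (desc s.inl s.inr s.condition).choose_spec.1)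
    (fun s => (desc s.inl s.inr s.condition).choose_spec.2)
    (fun s m hg hi' => sub_eq_zero.1 <| by
      obtain ⟨hl, hl'⟩ := (desc s.inl s.inr s.condition).choose_spec
      exact eq_zero _ (by rw [Preadditive.comp_sub, hg, hl, sub_self])
        (by rw [Preadditive.comp_sub, hi', hl', sub_self]))⟩⟩

lemma isPushout_add_comp (hp : IsPushout i t g i') (h : B ⟶ A') :
    IsPushout i (t + i ≫ h) (g + h ≫ i') i' := by
  refine isPushout_of_exists_desc (by simp [hp.w]) (fun b a hba => ?_) (fun l hg hi' => ?_)
  · exact ⟨hp.desc (b - h ≫ a) a (by simp [hba]), by simp, by simp⟩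
  · exact hp.hom_ext (by simpa [hi'] using hg) (by simpa using hi')

variable [HasBinaryBiproducts 𝒜]

lemma isPushout_biprodMap {A₁ B₁ A₁' S₁ A₂ B₂ A₂' S₂ : 𝒜} {i₁ : A₁ ⟶ B₁} {t₁ : A₁ ⟶ A₁'}
    {g₁ : B₁ ⟶ S₁} {i₁' : A₁' ⟶ S₁} {i₂ : A₂ ⟶ B₂} {t₂ : A₂ ⟶ A₂'} {g₂ : B₂ ⟶ S₂}
    {i₂' : A₂' ⟶ S₂} (h₁ : IsPushout i₁ t₁ g₁ i₁') (h₂ : IsPushout i₂ t₂ g₂ i₂') :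
    IsPushout (biprod.map i₁ i₂) (biprod.map t₁ t₂) (biprod.map g₁ g₂) (biprod.map i₁' i₂') := by
  refine isPushout_of_exists_desc (by ext <;> simp [h₁.w, h₂.w]) (fun b a hba => ?_)
    (fun l hg hi' => ?_)
  · obtain ⟨l₁, hl₁, hl₁'⟩ := h₁.exists_desc (biprod.inl ≫ b) (biprod.inl ≫ a)
      (by simpa using biprod.inl ≫= hba)
    obtain ⟨l₂, hl₂, hl₂'⟩ := h₂.exists_desc (biprod.inr ≫ b) (biprod.inr ≫ a)
      (by simpa using biprod.inr ≫= hba)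
    exact ⟨biprod.desc l₁ l₂, by ext <;> simp [hl₁, hl₂], by ext <;> simp [hl₁', hl₂']⟩
  · ext
    · exact h₁.hom_ext (by simpa using biprod.inl ≫= hg) (by simpa using biprod.inl ≫= hi')
    · exact h₂.hom_ext (by simpa using biprod.inr ≫= hg) (by simpa using biprod.inr ≫= hi')

lemma isPullback_biprodMap_inr {B Z : 𝒜} (X : 𝒜) (d : B ⟶ Z) :
    IsPullback biprod.inr d (biprod.map (𝟙 X) d) biprod.inr :=
  ⟨⟨by simp⟩, ⟨PullbackCone.IsLimit.mk _ (fun s => s.fst ≫ biprod.snd)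
    (fun s => by
      ext
      · simpa using (s.condition =≫ biprod.fst).symm
      · simp)
    (fun s => by simpa using s.condition =≫ biprod.snd)
    (fun s m hm _ => by simp [← hm])⟩⟩

lemma isPushout_inl (t : A ⟶ A') (Y : 𝒜) :
    IsPushout (biprod.inl : A ⟶ A ⊞ Y) t (biprod.map t (𝟙 Y)) biprod.inl := by
  refine isPushout_of_exists_desc (by simp) (fun b a hba => ?_) (fun l hg hi' => ?_)
  · exact ⟨biprod.desc a (biprod.inr ≫ b), by ext <;> simp [hba], by simp⟩
  · ext
    · simpa using hi'
    · simpa using biprod.inr ≫= hg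

lemma IsKernelCokernelPair.isPushout_biprodMap_snd {A B Z T V A' S : 𝒜} {i : A ⟶ B} {d : B ⟶ Z}
    {j : T ⟶ V} {t : T ⟶ A'} {g : V ⟶ S} {i' : A' ⟶ S} (h : IsKernelCokernelPair i d)
    (hp : IsPushout j t g i') :
    IsPushout (biprod.map i j) (biprod.snd ≫ t) (biprod.map d g) (i' ≫ biprod.inr) := by
  have := h.epi
  refine isPushout_of_exists_desc (by ext <;> simp [h.w, hp.w]) (fun b a hba => ?_)
    (fun l hg hi' => ?_)
  · obtain ⟨l₁, hl₁⟩ := h.exists_desc (biprod.inl ≫ b) (by simpa using biprod.inl ≫= hba)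
    obtain ⟨l₂, hl₂, hl₂'⟩ := hp.exists_desc (biprod.inr ≫ b) a
      (by simpa using biprod.inr ≫= hba)
    exact ⟨biprod.desc l₁ l₂, by ext <;> simp [hl₁, hl₂], by simp [hl₂']⟩
  · ext
    · simpa [← cancel_epi d] using biprod.inl ≫= hg
    · exact hp.hom_ext (by simpa using biprod.inr ≫= hg) (by simpa using hi')

end Pushout

section SplitPair

variable {𝒜 : Type*} [Category 𝒜] [Preadditive 𝒜] [HasBinaryBiproducts 𝒜] {A B Z A' B' Z' : 𝒜}
  {i : A ⟶ B} {d : B ⟶ Z} {i' : A' ⟶ B'} {d' : B' ⟶ Z'}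

lemma IsSplitPair.isKernelCokernelPair : IsSplitPair i d → IsKernelCokernelPair i d := by
  rintro ⟨X, Y, e⟩
  exact (IsKernelCokernelPair.inl_snd X Y).of_pairIso e

lemma IsSplitPair.of_pairIso (h : IsSplitPair i d) (e : PairIso i d i' d') :
    IsSplitPair i' d' := by
  obtain ⟨X, Y, e'⟩ := h
  exact ⟨X, Y, e'.trans e⟩

lemma IsSplitPair.isSplitMono (h : IsSplitPair i d) : IsSplitMono i := by
  obtain ⟨X, Y, eA, eB, -, w, -⟩ := h
  exact .mk' ⟨eB.inv ≫ biprod.fst ≫ eA.hom, by simp [← cancel_epi eA.hom, ← reassoc_of% w]⟩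

lemma IsSplitPair.isSplitEpi (h : IsSplitPair i d) : IsSplitEpi d := by
  obtain ⟨X, Y, -, eB, eZ, -, w⟩ := h
  exact .mk' ⟨eZ.inv ≫ biprod.inr ≫ eB.hom, by simp [← w]⟩

lemma exists_biprod_iso_of_isSplitMono [IsSplitMono i] {w : i ≫ d = 0}
    (hd : IsColimit (CokernelCofork.ofπ d w)) :
    ∃ e : A ⊞ Z ≅ B, biprod.inl ≫ e.hom = i ∧ e.hom ≫ d = biprod.snd := by
  have : Epi d := epi_of_isColimit_cofork hd
  obtain ⟨s, hs : d ≫ s = 𝟙 B - retraction i ≫ i⟩ :=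
    CokernelCofork.IsColimit.desc' hd (𝟙 B - retraction i ≫ i) (by simp)
  have hsd : s ≫ d = 𝟙 Z := by simp [← cancel_epi d, reassoc_of% hs, w]
  have hsr : s ≫ retraction i = 0 := by simp [← cancel_epi d, reassoc_of% hs]
  exact ⟨⟨biprod.desc i s, biprod.lift (retraction i) d, by ext <;> simp [hsd, hsr, w],
    by simp [hs]⟩, by simp, by ext <;> simp [hsd, w]⟩

namespace IsKernelCokernelPair

lemma isSplitPair_of_isSplitMono (h : IsKernelCokernelPair i d) [IsSplitMono i] :
    IsSplitPair i d := by
  obtain ⟨e, hi, hd⟩ := exists_biprod_iso_of_isSplitMono h.isCokernel.some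
  exact ⟨A, Z, Iso.refl A, e, Iso.refl Z, by simp [hi], by simp [hd]⟩

lemma isSplitPair_of_isSplitEpi (h : IsKernelCokernelPair i d) [IsSplitEpi d] :
    IsSplitPair i d := by
  have := h.mono
  obtain ⟨r, hr⟩ := h.exists_lift (𝟙 B - d ≫ section_ d) (by simp)
  have : IsSplitMono i := .mk' ⟨r, by simp [← cancel_mono i, hr, reassoc_of% h.w]⟩
  exact h.isSplitPair_of_isSplitMono

end IsKernelCokernelPair

lemma IsSplitPair.biprodMap (h : IsSplitPair i d) (h' : IsSplitPair i' d') :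
    IsSplitPair (biprod.map i i') (biprod.map d d') := by
  have := h.isSplitMono
  have := h'.isSplitMono
  have : IsSplitMono (biprod.map i i') :=
    .mk' ⟨biprod.map (retraction i) (retraction i'), by ext <;> simp⟩
  exact (h.isKernelCokernelPair.biprodMap h'.isKernelCokernelPair).isSplitPair_of_isSplitMono

lemma IsSplitPair.op (h : IsSplitPair i d) : IsSplitPair d.op i.op :=
  have := h.isSplitEpi
  h.isKernelCokernelPair.op.isSplitPair_of_isSplitMono

lemma IsSplitPair.unop {A B Z : 𝒜ᵒᵖ} {i : A ⟶ B} {d : B ⟶ Z} (h : IsSplitPair i d) :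
    IsSplitPair d.unop i.unop :=
  have := h.isSplitMono
  have : IsSplitEpi i.unop := .mk' ⟨(retraction i).unop, Quiver.Hom.op_inj (by simp)⟩
  h.isKernelCokernelPair.unop.isSplitPair_of_isSplitEpi

lemma isSplitPair_inl_snd (X Y : 𝒜) :
    IsSplitPair (biprod.inl : X ⟶ X ⊞ Y) (biprod.snd : X ⊞ Y ⟶ Y) :=
  ⟨X, Y, PairIso.refl _ _⟩

lemma isSplitPair_id_zero (X : 𝒜) {O : 𝒜} (hO : IsZero O) : IsSplitPair (𝟙 X) (0 : X ⟶ O) :=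
  ⟨X, O, Iso.refl X, (isoBiprodZero hO).symm, Iso.refl O, by simp, by simp [hO.eq_of_tgt _ 0]⟩

lemma isSplitPair_zero_id {O : 𝒜} (X : 𝒜) (hO : IsZero O) : IsSplitPair (0 : O ⟶ X) (𝟙 X) :=
  ⟨O, X, Iso.refl O, (isoZeroBiprod hO).symm, Iso.refl X, by simp [hO.eq_of_src _ 0], by simp⟩

end SplitPair

section FiniteBiproduct

variable {𝒜 : Type*} [Category 𝒜] [Preadditive 𝒜] [HasFiniteBiproducts 𝒜]

lemma isZero_biproduct_of_isEmpty {J : Type*} [Finite J] [IsEmpty J] (f : J → 𝒜) :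
    IsZero (⨁ f) :=
  (IsZero.iff_id_eq_zero _).2 (biproduct.hom_ext _ _ fun j => isEmptyElim j)

variable [HasBinaryBiproducts 𝒜]

/-- Splitting off the summand with index `0` from a finite biproduct. -/
noncomputable def biproductFinSuccIso {n : ℕ} (f : Fin (n + 1) → 𝒜) :
    ⨁ f ≅ f 0 ⊞ ⨁ fun j : Fin n => f j.succ where
  hom := biprod.lift (biproduct.π f 0) (biproduct.lift fun j => biproduct.π f j.succ)
  inv := biprod.desc (biproduct.ι f 0) (biproduct.desc fun j => biproduct.ι f j.succ)
  hom_inv_id := by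
    rw [biprod.lift_desc, biproduct.lift_desc, ← biproduct.total, Fin.sum_univ_succ]
  inv_hom_id := by
    ext <;> simp [biproduct.ι_π, (Fin.succ_ne_zero _).symm]

lemma pairIso_biproductMap_succ {A B Z : 𝒜} (i : A ⟶ B) (d : B ⟶ Z) (n : ℕ) :
    PairIso (biproduct.map fun _ : Fin (n + 1) => i) (biproduct.map fun _ : Fin (n + 1) => d)
      (biprod.map i (biproduct.map fun _ : Fin n => i))
      (biprod.map d (biproduct.map fun _ : Fin n => d)) := by
  refine ⟨biproductFinSuccIso _, biproductFinSuccIso _, biproductFinSuccIso _,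
    biprod.hom_ext _ _ ?_ (biproduct.hom_ext _ _ fun j => ?_),
    biprod.hom_ext _ _ ?_ (biproduct.hom_ext _ _ fun j => ?_)⟩ <;>
  simp [biproductFinSuccIso]

end FiniteBiproduct

namespace InEAlpha

variable {𝒜 : Type*} [Category 𝒜] [Preadditive 𝒜] [HasBinaryBiproducts 𝒜]
  [HasFiniteBiproducts 𝒜] {A B Z : 𝒜} {i : A ⟶ B} {d : B ⟶ Z} {A' B' Z' A'' B'' Z'' : 𝒜}
  {i' : A' ⟶ B'} {d' : B' ⟶ Z'} {i'' : A'' ⟶ B''} {d'' : B'' ⟶ Z''}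

lemma of_pairIso (h : InEAlpha i d i' d') (e : PairIso i' d' i'' d'') : InEAlpha i d i'' d'' := by
  obtain ⟨X, Y, n, e'⟩ := h
  exact ⟨X, Y, n, e'.trans e⟩

lemma of_isSplitPair (h : IsSplitPair i' d') : InEAlpha i d i' d' := by
  obtain ⟨X, Y, e⟩ := h
  exact ⟨X, Y, 0, (PairIso.biprodZero _ _ _ _ (isZero_biproduct_of_isEmpty _)
    (isZero_biproduct_of_isEmpty _) (isZero_biproduct_of_isEmpty _)).symm.trans e⟩

lemma biprodMap_self (h : InEAlpha i d i' d') :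
    InEAlpha i d (biprod.map i i') (biprod.map d d') := by
  obtain ⟨X, Y, n, e⟩ := h
  exact ⟨X, Y, n + 1, ((PairIso.refl _ _).biprodMap (pairIso_biproductMap_succ i d n)).trans
    ((PairIso.biprodLeftComm ..).trans ((PairIso.refl i d).biprodMap e))⟩

@[elab_as_elim]
lemma induction
    {motive : ∀ {A' B' Z' : 𝒜} (i' : A' ⟶ B') (d' : B' ⟶ Z'), InEAlpha i d i' d' → Prop}
    (isSplitPair : ∀ {A' B' Z' : 𝒜} {i' : A' ⟶ B'} {d' : B' ⟶ Z'} (h : IsSplitPair i' d'),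
      motive i' d' (of_isSplitPair h))
    (pairIso : ∀ {A' B' Z' A'' B'' Z'' : 𝒜} {i' : A' ⟶ B'} {d' : B' ⟶ Z'} {i'' : A'' ⟶ B''}
      {d'' : B'' ⟶ Z''} (e : PairIso i' d' i'' d'') (h : InEAlpha i d i' d'),
      motive i' d' h → motive i'' d'' (h.of_pairIso e))
    (biprodMap_self : ∀ {A' B' Z' : 𝒜} {i' : A' ⟶ B'} {d' : B' ⟶ Z'} (h : InEAlpha i d i' d'),
      motive i' d' h → motive (biprod.map i i') (biprod.map d d') h.biprodMap_self)
    (h : InEAlpha i d i' d') : motive i' d' h := by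
  obtain ⟨X, Y, n, e⟩ := h
  refine pairIso e ⟨X, Y, n, PairIso.refl _ _⟩ ?_
  clear e
  induction n with
  | zero =>
    exact pairIso (PairIso.biprodZero _ _ _ _ (isZero_biproduct_of_isEmpty _)
      (isZero_biproduct_of_isEmpty _) (isZero_biproduct_of_isEmpty _)) _
      (isSplitPair (isSplitPair_inl_snd X Y))
  | succ n ih =>
    exact pairIso (((PairIso.refl _ _).biprodMap (pairIso_biproductMap_succ i d n)).trans
      (PairIso.biprodLeftComm ..)).symm _ (biprodMap_self _ ih)

lemma isSplitPair_or_exists_pairIso (h : InEAlpha i d i' d') : IsSplitPair i' d' ∨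
    ∃ (T V U : 𝒜) (j : T ⟶ V) (e : V ⟶ U),
      InEAlpha i d j e ∧ PairIso (biprod.map i j) (biprod.map d e) i' d' := by
  induction h using InEAlpha.induction with
  | isSplitPair h => exact .inl h
  | pairIso e _ ih =>
    refine ih.imp (fun h => h.of_pairIso e) ?_
    rintro ⟨T, V, U, j, k, hj, e'⟩
    exact ⟨T, V, U, j, k, hj, e'.trans e⟩
  | biprodMap_self h => exact .inr ⟨_, _, _, _, _, h, PairIso.refl _ _⟩

lemma isKernelCokernelPair (h : InEAlpha i d i' d') (hα : IsKernelCokernelPair i d) :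
    IsKernelCokernelPair i' d' := by
  induction h using InEAlpha.induction with
  | isSplitPair h => exact h.isKernelCokernelPair
  | pairIso e _ ih => exact ih.of_pairIso e
  | biprodMap_self _ ih => exact hα.biprodMap ih

lemma biprodMap_isSplitPair (h' : IsSplitPair i' d') (h : InEAlpha i d i'' d'') :
    InEAlpha i d (biprod.map i' i'') (biprod.map d' d'') := by
  induction h using InEAlpha.induction with
  | isSplitPair h => exact of_isSplitPair (h'.biprodMap h)
  | pairIso e _ ih => exact ih.of_pairIso ((PairIso.refl _ _).biprodMap e)
  | biprodMap_self _ ih => exact ih.biprodMap_self.of_pairIso (PairIso.biprodLeftComm ..)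

lemma biprodMap (h' : InEAlpha i d i' d') (h : InEAlpha i d i'' d'') :
    InEAlpha i d (biprod.map i' i'') (biprod.map d' d'') := by
  induction h' using InEAlpha.induction with
  | isSplitPair h' => exact biprodMap_isSplitPair h' h
  | pairIso e _ ih => exact ih.of_pairIso (e.biprodMap (PairIso.refl _ _))
  | biprodMap_self _ ih => exact ih.biprodMap_self.of_pairIso (PairIso.biprodAssoc ..).symm

lemma op [HasFiniteBiproducts 𝒜ᵒᵖ] (h : InEAlpha i d i' d') :
    InEAlpha d.op i.op d'.op i'.op := by
  induction h using InEAlpha.induction with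
  | isSplitPair h => exact of_isSplitPair h.op
  | pairIso e _ ih => exact ih.of_pairIso e.op
  | biprodMap_self _ ih => exact ih.biprodMap_self.of_pairIso (PairIso.op_biprodMap ..)

lemma unop [HasFiniteBiproducts 𝒜ᵒᵖ] {A B Z A' B' Z' : 𝒜ᵒᵖ} {i : A ⟶ B} {d : B ⟶ Z} {i' : A' ⟶ B'}
    {d' : B' ⟶ Z'} (h : InEAlpha i d i' d') : InEAlpha d.unop i.unop d'.unop i'.unop := by
  induction h using InEAlpha.induction with
  | isSplitPair h => exact of_isSplitPair h.unop
  | pairIso e _ ih => exact ih.of_pairIso e.unop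
  | biprodMap_self _ ih => exact ih.biprodMap_self.of_pairIso (PairIso.unop_biprodMap ..)

end InEAlpha

section HasComplements

variable {𝒜 : Type*} [Category 𝒜] [Preadditive 𝒜]

/-- Every split monomorphism `X ⟶ Y` out of `X` is the inclusion of a direct summand: it has a
cokernel, which is then a complement of `X` in `Y`. -/
def HasComplements (X : 𝒜) : Prop :=
  ∀ ⦃Y : 𝒜⦄ (s : X ⟶ Y) [IsSplitMono s], HasCokernel s

/-- Both sides say that the idempotent `𝟙 Y - r ≫ s` splits. -/
lemma hasCokernel_iff_hasKernel_of_comp_eq_id {X Y : 𝒜} {s : X ⟶ Y} {r : Y ⟶ X}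
    (h : s ≫ r = 𝟙 X) : HasCokernel s ↔ HasKernel r := by
  constructor <;> intro _
  · let k : cokernel s ⟶ Y := cokernel.desc s (𝟙 Y - r ≫ s) (by simp [reassoc_of% h])
    have hk : k ≫ cokernel.π s = 𝟙 _ := by simp [k, ← cancel_epi (cokernel.π s)]
    have : Mono k := mono_of_mono_fac hk
    have w : k ≫ r = 0 := by simp [k, ← cancel_epi (cokernel.π s), h]
    exact ⟨⟨_, KernelFork.IsLimit.ofι' k w fun f hf =>
      ⟨f ≫ cokernel.π s, by simp [k, reassoc_of% hf]⟩⟩⟩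
  · let p : Y ⟶ kernel r := kernel.lift r (𝟙 Y - r ≫ s) (by simp [h])
    have hp : kernel.ι r ≫ p = 𝟙 _ := by simp [p, ← cancel_mono (kernel.ι r)]
    have : Epi p := epi_of_epi_fac hp
    have w : s ≫ p = 0 := by simp [p, ← cancel_mono (kernel.ι r), reassoc_of% h]
    exact ⟨⟨_, CokernelCofork.IsColimit.ofπ' p w fun f hf =>
      ⟨kernel.ι r ≫ f, by simp [p, hf]⟩⟩⟩

lemma HasComplements.op {X : 𝒜} (hX : HasComplements X) : HasComplements (Opposite.op X) := by
  intro Y s _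
  have h : (retraction s).unop ≫ s.unop = 𝟙 X := Quiver.Hom.op_inj (IsSplitMono.id s)
  have : IsSplitMono (retraction s).unop := .mk' ⟨_, h⟩
  have : HasKernel s.unop := (hasCokernel_iff_hasKernel_of_comp_eq_id h).1 (hX _)
  exact ⟨⟨_, KernelFork.IsLimit.ofιOp _ (kernel.condition s.unop) (kernelIsKernel s.unop)⟩⟩

lemma HasComplements.of_iso {X X' : 𝒜} (hX : HasComplements X) (e : X ≅ X') :
    HasComplements X' := by
  intro Y s _
  have := hX (e.hom ≫ s)
  simpa using (inferInstance : HasCokernel (e.inv ≫ e.hom ≫ s))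

end HasComplements

section Indecomposable

variable {𝒜 : Type*} [Category 𝒜] [Preadditive 𝒜] [HasBinaryBiproducts 𝒜] {X Y : 𝒜}

lemma Indecomposable'.isIso_of_isSplitMono (hX : Indecomposable' X) (hY : ¬ IsZero Y) (s : Y ⟶ X)
    [IsSplitMono s] [HasCokernel s] : IsIso s := by
  obtain ⟨e, he, -⟩ := exists_biprod_iso_of_isSplitMono (w := cokernel.condition s)
    (cokernelIsCokernel s)
  have hC := (hX.2 _ _ ⟨e.symm⟩).resolve_left hY
  have : s = (isoBiprodZero hC ≪≫ e).hom := by simp [isoBiprodZero, he]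
  rw [this]
  infer_instance

lemma Indecomposable'.op (hX : Indecomposable' X) : Indecomposable' (Opposite.op X) := by
  refine ⟨fun h => hX.1 h.unop, ?_⟩
  rintro U V ⟨e⟩
  exact (hX.2 U.unop V.unop ⟨e.symm.unop ≪≫ (opBiprodIso U.unop V.unop).unop⟩).imp
    IsZero.op IsZero.op

end Indecomposable

namespace IsAlmostSplit

variable {𝒜 : Type*} [Category 𝒜] [Preadditive 𝒜] [HasBinaryBiproducts 𝒜] {A B Z : 𝒜}
  {i : A ⟶ B} {d : B ⟶ Z}

lemma isKernelCokernelPair (hα : IsAlmostSplit i d) : IsKernelCokernelPair i d := hα.1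

lemma not_isSplitMono (hα : IsAlmostSplit i d) : ¬ IsSplitMono i :=
  fun _ => hα.2.1 hα.1.isSplitPair_of_isSplitMono

lemma exists_comp_eq (hα : IsAlmostSplit i d) {X : 𝒜} (f : A ⟶ X) (hf : ¬ IsSplitMono f) :
    ∃ h, i ≫ h = f :=
  hα.2.2.2.2.1 f fun ⟨r, hr⟩ => hf (.mk' ⟨r, hr⟩)

lemma op (hα : IsAlmostSplit i d) : IsAlmostSplit d.op i.op := by
  obtain ⟨hk, hs, hA, hZ, hl, hr⟩ := hα
  refine ⟨hk.op, fun h => hs h.unop, hZ.op, hA.op, fun f hf => ?_, fun f hf => ?_⟩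
  · obtain ⟨h, hh⟩ := hr f.unop fun ⟨s, hs⟩ => hf ⟨s.op, Quiver.Hom.unop_inj hs⟩
    exact ⟨h.op, Quiver.Hom.unop_inj hh⟩
  · obtain ⟨h, hh⟩ := hl f.unop fun ⟨s, hs⟩ => hf ⟨s.op, Quiver.Hom.unop_inj hs⟩
    exact ⟨h.op, Quiver.Hom.unop_inj hh⟩

lemma exists_comp_eq_comp (hα : IsAlmostSplit i d)
    (hA : HasComplements A) (u : A ⟶ A) :
    ∃ w, i ≫ w = u ≫ i := by
  -- If `u ≫ i` is a split mono then so is `u`; it is invertible as `A` is indecomposable, so `i`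
  -- splits.
  refine hα.exists_comp_eq _ fun _ => hα.not_isSplitMono ?_
  have : IsSplitMono u :=
    .mk' ⟨i ≫ retraction (u ≫ i), by rw [← Category.assoc, IsSplitMono.id]⟩
  have := hA u
  have := hα.2.2.1.isIso_of_isSplitMono hα.2.2.1.1 u
  exact .mk' ⟨retraction (u ≫ i) ≫ u, by
    rw [← cancel_epi u, ← Category.assoc, ← Category.assoc, IsSplitMono.id]; simp⟩

end IsAlmostSplit

section ExistsPushout

variable {𝒜 : Type*} [Category 𝒜] [Preadditive 𝒜] [HasBinaryBiproducts 𝒜]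
  {A B Z T V U A' : 𝒜} {i : A ⟶ B} {d : B ⟶ Z} {j : T ⟶ V} {e : V ⟶ U}

lemma IsSplitPair.exists_isPushout (h : IsSplitPair i d) (t : A ⟶ A') :
    ∃ (S Z' : 𝒜) (g : B ⟶ S) (i' : A' ⟶ S) (d' : S ⟶ Z'),
      IsPushout i t g i' ∧ IsSplitPair i' d' := by
  obtain ⟨X, Y, eA, eB, -, w, -⟩ := h
  exact ⟨_, _, eB.inv ≫ biprod.map (eA.hom ≫ t) (𝟙 Y), biprod.inl, biprod.snd,
    (isPushout_inl (eA.hom ≫ t) Y).of_iso eA eB (Iso.refl _) (Iso.refl _) w (by simp) (by simp)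
      (by simp), isSplitPair_inl_snd _ _⟩

variable [HasFiniteBiproducts 𝒜]

lemma InEAlpha.exists_comp_eq_comp (hj : InEAlpha i d j e)
    (hi : ∀ u : A ⟶ A, ∃ w, i ≫ w = u ≫ i) (x : T ⟶ A) : ∃ w, j ≫ w = x ≫ i := by
  induction hj using InEAlpha.induction with
  | isSplitPair h =>
    have := h.isSplitMono
    exact ⟨retraction _ ≫ x ≫ i, IsSplitMono.id_assoc _ _⟩
  | pairIso e' _ ih =>
    obtain ⟨eT, eV, -, hj, -⟩ := e'
    obtain ⟨w, hw⟩ := ih (eT.hom ≫ x)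
    exact ⟨eV.inv ≫ w, by simp [← cancel_epi eT.hom, ← reassoc_of% hj, hw]⟩
  | biprodMap_self _ ih =>
    obtain ⟨w₁, hw₁⟩ := hi (biprod.inl ≫ x)
    obtain ⟨w₂, hw₂⟩ := ih (biprod.inr ≫ x)
    exact ⟨biprod.desc w₁ w₂, by ext <;> simp [hw₁, hw₂]⟩

/-- Subtracting `h` from the square reduces to `biprod.inl ≫ t = 0`, whose pushout splits off
`Z`. -/
lemma InEAlpha.exists_isPushout_of_comp_eq [HasZeroObject 𝒜] (hk : IsKernelCokernelPair i d)
    {t : A ⊞ T ⟶ A'} {h : B ⟶ A'} (ht : i ≫ h = biprod.inl ≫ t)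
    {S Z' : 𝒜} {g : V ⟶ S} {i' : A' ⟶ S} {d' : S ⟶ Z'}
    (hp : IsPushout j (biprod.inr ≫ t) g i') (hi' : InEAlpha i d i' d') :
    ∃ (S' Z'' : 𝒜) (g' : B ⊞ V ⟶ S') (i'' : A' ⟶ S') (d'' : S' ⟶ Z''),
      IsPushout (biprod.map i j) t g' i'' ∧ InEAlpha i d i'' d'' := by
  have hp' := isPushout_add_comp (hk.isPushout_biprodMap_snd hp) (biprod.fst ≫ h)
  have ht' : biprod.snd ≫ biprod.inr ≫ t + biprod.map i j ≫ biprod.fst ≫ h = t := by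
    ext <;> simp [ht]
  rw [ht'] at hp'
  exact ⟨_, _, _, _, _, hp', (biprodMap_isSplitPair (isSplitPair_zero_id Z (isZero_zero 𝒜))
    hi').of_pairIso (PairIso.zeroBiprod Z i' d' (isZero_zero 𝒜))⟩

/-- Row and column operations reduce to `biprod.inl ≫ t` being a direct summand inclusion. -/
lemma InEAlpha.exists_isPushout_of_biprodIso {A'' : 𝒜} (eA' : A ⊞ A'' ≅ A') {t : A ⊞ T ⟶ A'}
    (ht : biprod.inl ≫ t = biprod.inl ≫ eA'.hom)
    (hlift : ∃ w : V ⟶ B, j ≫ w = (biprod.inr ≫ t ≫ eA'.inv ≫ biprod.fst) ≫ i)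
    {S Z' : 𝒜} {g : V ⟶ S} {i' : A'' ⟶ S} {d' : S ⟶ Z'}
    (hp : IsPushout j (biprod.inr ≫ t ≫ eA'.inv ≫ biprod.snd) g i') (hi' : InEAlpha i d i' d') :
    ∃ (S' Z'' : 𝒜) (g' : B ⊞ V ⟶ S') (i'' : A' ⟶ S') (d'' : S' ⟶ Z''),
      IsPushout (biprod.map i j) t g' i'' ∧ InEAlpha i d i'' d'' := by
  obtain ⟨w, hw⟩ := hlift
  let eT := Biprod.unipotentLower (biprod.inr ≫ t ≫ eA'.inv ≫ biprod.fst)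
  let eV := Biprod.unipotentLower w
  have hsq : IsPushout (biprod.map i j) eT.hom eV.hom (biprod.map i j) :=
    .of_vert_isIso ⟨by ext <;> simp [eT, eV, hw, Biprod.ofComponents]⟩
  have hsum := isPushout_biprodMap (IsPushout.id_vert i) hp
  have ht' : eT.hom ≫ biprod.map (𝟙 A) (biprod.inr ≫ t ≫ eA'.inv ≫ biprod.snd) = t ≫ eA'.inv := by
    ext <;> simp [eT, reassoc_of% ht, Biprod.ofComponents]
  exact ⟨_, _, eV.hom ≫ biprod.map (𝟙 B) g, eA'.inv ≫ biprod.map i i', biprod.map d d',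
    (hsq.paste_vert hsum).of_iso (Iso.refl _) (Iso.refl _) eA' (Iso.refl _) (by simp)
      (by simp [ht']) (by simp) (by simp),
    hi'.biprodMap_self.of_pairIso ⟨eA', Iso.refl _, Iso.refl _, by simp, by simp⟩⟩

theorem InEAlpha.exists_isPushout [HasZeroObject 𝒜] (hα : IsAlmostSplit i d)
    (hA : HasComplements A) (hj : InEAlpha i d j e) (t : T ⟶ A') :
    ∃ (S Z' : 𝒜) (g : V ⟶ S) (i' : A' ⟶ S) (d' : S ⟶ Z'),
      IsPushout j t g i' ∧ InEAlpha i d i' d' := by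
  induction hj using InEAlpha.induction generalizing A' with
  | isSplitPair h =>
    obtain ⟨S, Z', g, i', d', hp, hs⟩ := h.exists_isPushout t
    exact ⟨S, Z', g, i', d', hp, of_isSplitPair hs⟩
  | pairIso e' _ ih =>
    obtain ⟨eA, eB, -, w, -⟩ := e'
    obtain ⟨S, Z', g, i', d', hp, hs⟩ := ih (eA.hom ≫ t)
    exact ⟨S, Z', eB.inv ≫ g, i', d', hp.of_iso eA eB (Iso.refl _) (Iso.refl _) w
      (by simp) (by simp) (by simp), hs⟩
  | biprodMap_self hj ih =>
    by_cases ht : IsSplitMono (biprod.inl ≫ t)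
    · have := hA (biprod.inl ≫ t)
      obtain ⟨eA', he, -⟩ := exists_biprod_iso_of_isSplitMono
        (w := cokernel.condition (biprod.inl ≫ t)) (cokernelIsCokernel _)
      obtain ⟨S, Z', g, i', d', hp, hi'⟩ := ih (biprod.inr ≫ t ≫ eA'.inv ≫ biprod.snd)
      exact exists_isPushout_of_biprodIso eA' he.symm
        (hj.exists_comp_eq_comp (hα.exists_comp_eq_comp hA) _) hp hi'
    · obtain ⟨h, hh⟩ := hα.exists_comp_eq _ ht
      obtain ⟨S, Z', g, i', d', hp, hi'⟩ := ih (biprod.inr ≫ t)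
      exact exists_isPushout_of_comp_eq hα.isKernelCokernelPair hh hp hi'

end ExistsPushout

theorem InEAlpha.exists_isPullback {𝒜 : Type*} [Category 𝒜] [Preadditive 𝒜]
    [HasBinaryBiproducts 𝒜] [HasFiniteBiproducts 𝒜] [HasZeroObject 𝒜] {A B Z A₁ B₁ Z₁ D : 𝒜}
    {i : A ⟶ B} {d : B ⟶ Z} {j : A₁ ⟶ B₁} {e : B₁ ⟶ Z₁} (hα : IsAlmostSplit i d)
    (hZ : HasComplements Z) (hj : InEAlpha i d j e) (t : D ⟶ Z₁) :
    ∃ (P A' : 𝒜) (p : P ⟶ B₁) (q : P ⟶ D) (i' : A' ⟶ P),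
      IsPullback p q e t ∧ InEAlpha i d i' q := by
  have : HasFiniteBiproducts 𝒜ᵒᵖ := .of_hasFiniteProducts
  obtain ⟨S, Z', g, i', d', hp, hi'⟩ := hj.op.exists_isPushout hα.op hZ.op t.op
  exact ⟨_, _, g.unop, i'.unop, d'.unop, hp.unop.flip, hi'.unop⟩

namespace WeaklyExactStructure

variable {𝒜 : Type*} [Category 𝒜] [Preadditive 𝒜] [HasZeroObject 𝒜] [HasBinaryBiproducts 𝒜]
  (𝒲 : WeaklyExactStructure 𝒜) {A B Z A' B' Z' : 𝒜} {i : A ⟶ B} {d : B ⟶ Z} {i' : A' ⟶ B'}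
  {d' : B' ⟶ Z'}

lemma mem_of_isSplitPair (h : IsSplitPair i d) : 𝒲.W i d := by
  obtain ⟨X, Y, e⟩ := h
  exact 𝒲.iso_closed (𝒲.sum_mem (𝒲.id_zero_mem X) (𝒲.zero_id_mem Y)) <|
    .trans ⟨(isoBiprodZero (isZero_zero 𝒜)).symm, Iso.refl _, (isoZeroBiprod (isZero_zero 𝒜)).symm,
      by ext <;> simp [isoBiprodZero], by ext <;> simp [isoZeroBiprod]⟩ e

variable {𝒲}

lemma mem_of_isPushout (hi : 𝒲.W i d) {t : A ⟶ A'} {g : B ⟶ B'} (hp : IsPushout i t g i')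
    (hi' : IsKernelCokernelPair i' d') : 𝒲.W i' d' := by
  obtain ⟨S, g', i'', hp', Z'', d'', h⟩ := 𝒲.pushout_mem hi t
  exact 𝒲.iso_closed h <| (𝒲.kc_of_mem h).pairIso_of_iso_left hi' (Iso.refl _)
    (hp'.isoIsPushout _ _ hp) (by simp)

lemma mem_of_isPullback (hi : 𝒲.W i d) {t : Z' ⟶ Z} {p : B' ⟶ B} (hp : IsPullback p d' d t)
    (hd' : IsKernelCokernelPair i' d') : 𝒲.W i' d' := by
  obtain ⟨P, p', q, hp', A'', i'', h⟩ := 𝒲.pullback_mem hi t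
  exact 𝒲.iso_closed h <| (𝒲.kc_of_mem h).pairIso_of_iso_right hd'
    (hp'.isoIsPullback _ _ hp) (Iso.refl _) (by simp)

lemma mem_right_of_biprodMap_mem (h : IsKernelCokernelPair i d) (h' : IsKernelCokernelPair i' d')
    (hsum : 𝒲.W (biprod.map i i') (biprod.map d d')) : 𝒲.W i' d' := by
  have hp : IsPushout (biprod.map i i') (biprod.snd ≫ 𝟙 A') (biprod.map d (𝟙 B'))
      (i' ≫ biprod.inr) := h.isPushout_biprodMap_snd (IsPushout.id_vert i')
  have hO : IsKernelCokernelPair (i' ≫ biprod.inr) (biprod.map (𝟙 Z) d') :=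
    ((isSplitPair_zero_id Z (isZero_zero 𝒜)).isKernelCokernelPair.biprodMap h').of_pairIso
      (PairIso.zeroBiprod Z i' d' (isZero_zero 𝒜))
  exact mem_of_isPullback (mem_of_isPushout hsum hp hO) (isPullback_biprodMap_inr Z d') h'

variable [HasFiniteBiproducts 𝒜]

lemma mem_of_inEAlpha (hα : 𝒲.W i d) (h : InEAlpha i d i' d') : 𝒲.W i' d' := by
  induction h using InEAlpha.induction with
  | isSplitPair h => exact 𝒲.mem_of_isSplitPair h
  | pairIso e _ ih => exact 𝒲.iso_closed ih e
  | biprodMap_self _ ih => exact 𝒲.sum_mem hα ih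

lemma mem_of_mem_of_not_isSplitPair (hα : IsKernelCokernelPair i d) (h : InEAlpha i d i' d')
    (hs : ¬ IsSplitPair i' d') (hi' : 𝒲.W i' d') : 𝒲.W i d := by
  obtain ⟨T, V, U, j, e, hj, e'⟩ := h.isSplitPair_or_exists_pairIso.resolve_left hs
  exact mem_right_of_biprodMap_mem (hj.isKernelCokernelPair hα) hα
    (𝒲.iso_closed hi' (e'.symm.trans (PairIso.biprodComm ..)))

/-- The class `𝓔_α` of an almost split sequence `α = (i, d)` whose end terms have complements. -/
def eAlpha (hα : IsAlmostSplit i d) (hA : HasComplements A) (hZ : HasComplements Z) :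
    WeaklyExactStructure 𝒜 where
  W _ _ _ i' d' := InEAlpha i d i' d'
  kc_of_mem h := h.isKernelCokernelPair hα.isKernelCokernelPair
  iso_closed h e := h.of_pairIso e
  sum_mem h₁ h₂ := h₁.biprodMap h₂
  id_zero_mem X := .of_isSplitPair (isSplitPair_id_zero X (isZero_zero 𝒜))
  zero_id_mem X := .of_isSplitPair (isSplitPair_zero_id X (isZero_zero 𝒜))
  pushout_mem h t :=
    let ⟨S, Z', g, i', d', hp, hi'⟩ := h.exists_isPushout hα hA t
    ⟨S, g, i', hp, Z', d', hi'⟩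
  pullback_mem h t :=
    let ⟨P, A', p, q, i', hp, hi'⟩ := h.exists_isPullback hα hZ t
    ⟨P, p, q, hp, A', i', hi'⟩

end WeaklyExactStructure

section KrullSchmidt

variable {𝒜 : Type*} [Category 𝒜] [Preadditive 𝒜]

lemma isIso_of_isSplitMono_of_isLocalRing_end {L F : 𝒜} [IsLocalRing (End F)] (hL : ¬ IsZero L)
    (s : L ⟶ F) [IsSplitMono s] : IsIso s := by
  let p : End F := retraction s ≫ s
  rcases IsLocalRing.isUnit_or_isUnit_of_add_one (add_sub_cancel p 1) with he | he
  · have : IsIso (retraction s ≫ s) := (isUnit_iff_isIso _).1 he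
    have : IsSplitEpi s := .mk' ⟨inv (retraction s ≫ s) ≫ retraction s, by simp⟩
    exact isIso_of_mono_of_isSplitEpi s
  · have : IsIso (𝟙 F - retraction s ≫ s) := (isUnit_iff_isIso _).1 he
    have hs : s = 0 := by simp [← cancel_mono (𝟙 F - retraction s ≫ s)]
    exact absurd (IsZero.of_mono_eq_zero s hs) hL

lemma exists_isIso_comp_biproduct_π {J : Type} [Finite J] {f : J → 𝒜} [HasBiproduct f]
    (hf : ∀ j, IsLocalRing (End (f j))) {L : 𝒜} [IsLocalRing (End L)] (s : L ⟶ ⨁ f)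
    [IsSplitMono s] : ∃ j, IsIso (s ≫ biproduct.π f j) := by
  cases nonempty_fintype J
  have hL : ¬ IsZero L := fun h => one_ne_zero (α := End L) (h.eq_of_src _ _)
  let u (j : J) : L ⟶ L := s ≫ biproduct.π f j ≫ biproduct.ι f j ≫ retraction s
  have hu : ∑ j, u j = 𝟙 L := by
    calc ∑ j, u j = s ≫ (∑ j, biproduct.π f j ≫ biproduct.ι f j) ≫ retraction s := by
          simp only [u, Preadditive.sum_comp, Preadditive.comp_sum, Category.assoc]
      _ = 𝟙 L := by simp
  obtain ⟨j, -, hj⟩ := IsLocalRing.exists_of_isUnit_sum (R := End L)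
    (hu.symm ▸ isUnit_one : IsUnit (M := End L) (∑ j, u j))
  have : IsIso (u j) := (isUnit_iff_isIso _).1 hj
  have : IsSplitMono (s ≫ biproduct.π f j) :=
    .mk' ⟨biproduct.ι f j ≫ retraction s ≫ inv (u j), by
      simp only [Category.assoc, ← IsIso.hom_inv_id (u j), u]⟩
  have := hf j
  exact ⟨j, isIso_of_isSplitMono_of_isLocalRing_end hL _⟩

variable [HasFiniteBiproducts 𝒜]

lemma hasComplements_of_isLocalRing_end (hKS : ∀ X : 𝒜, ∃ (n : ℕ) (f : Fin n → 𝒜),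
    (∀ j, IsLocalRing (End (f j))) ∧ Nonempty (X ≅ ⨁ f)) (L : 𝒜) [IsLocalRing (End L)] :
    HasComplements L := by
  intro X s _
  obtain ⟨n, f, hf, ⟨e⟩⟩ := hKS X
  obtain ⟨j, hj⟩ := exists_isIso_comp_biproduct_π hf (s ≫ e.hom)
  let σ : L ⟶ f j := (s ≫ e.hom) ≫ biproduct.π f j
  have h : s ≫ e.hom ≫ biproduct.π f j ≫ inv σ = 𝟙 L := by
    simp only [← IsIso.hom_inv_id σ, σ, Category.assoc]
  exact (hasCokernel_iff_hasKernel_of_comp_eq_id h).2 inferInstance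

variable [HasBinaryBiproducts 𝒜]

lemma Indecomposable'.exists_iso_isLocalRing_end {X : 𝒜} (hX : Indecomposable' X) {n : ℕ}
    {f : Fin n → 𝒜} (hf : ∀ j, IsLocalRing (End (f j))) (e : X ≅ ⨁ f) :
    ∃ L : 𝒜, IsLocalRing (End L) ∧ Nonempty (L ≅ X) := by
  cases n with
  | zero => exact absurd ((isZero_biproduct_of_isEmpty f).of_iso e) hX.1
  | succ n =>
    have := hf 0
    have h₀ : ¬ IsZero (f 0) := fun h => one_ne_zero (α := End (f 0)) (h.eq_of_src _ _)
    have e' := e ≪≫ biproductFinSuccIso f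
    exact ⟨f 0, hf 0, ⟨isoBiprodZero ((hX.2 _ _ ⟨e'⟩).resolve_left h₀) ≪≫ e'.symm⟩⟩

lemma Indecomposable'.hasComplements {X : 𝒜} (hX : Indecomposable' X)
    (hKS : ∀ X : 𝒜, ∃ (n : ℕ) (f : Fin n → 𝒜),
      (∀ j, IsLocalRing (End (f j))) ∧ Nonempty (X ≅ ⨁ f)) : HasComplements X := by
  obtain ⟨n, f, hf, ⟨e⟩⟩ := hKS X
  obtain ⟨L, hL, ⟨eL⟩⟩ := hX.exists_iso_isLocalRing_end hf e
  exact (hasComplements_of_isLocalRing_end hKS L).of_iso eL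

end KrullSchmidt

theorem statement18_general {A B Z : C} (i : A ⟶ B) (d : B ⟶ Z) (hα : IsAlmostSplit i d)
    (hA : HasComplements A) (hZ : HasComplements Z) :
    ∃ Eα : WeaklyExactStructure C,
      (∀ {A' B' Z' : C} (i' : A' ⟶ B') (d' : B' ⟶ Z'), Eα.W i' d' ↔ InEAlpha i d i' d') ∧
      ∀ 𝒲 : WeaklyExactStructure C,
        (∀ {A' B' Z' : C} (i' : A' ⟶ B') (d' : B' ⟶ Z'), 𝒲.W i' d' → Eα.W i' d') →
        ((∀ {A' B' Z' : C} (i' : A' ⟶ B') (d' : B' ⟶ Z'), 𝒲.W i' d' ↔ IsSplitPair i' d') ∨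
         (∀ {A' B' Z' : C} (i' : A' ⟶ B') (d' : B' ⟶ Z'), 𝒲.W i' d' ↔ Eα.W i' d')) := by
  refine ⟨.eAlpha hα hA hZ, fun _ _ => Iff.rfl, fun 𝒲 hle => ?_⟩
  by_cases hmem : 𝒲.W i d
  · exact .inr fun _ _ => ⟨hle _ _, 𝒲.mem_of_inEAlpha hmem⟩
  · refine .inl fun _ _ => ⟨fun h => ?_, 𝒲.mem_of_isSplitPair⟩
    by_contra hs
    exact hmem (𝒲.mem_of_mem_of_not_isSplitPair hα.isKernelCokernelPair (hle _ _ h) hs h)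

/-- In a Hom-finite Krull–Schmidt category, the class `𝓔_α` generated by an almost split
sequence `α` is a weakly exact structure and is an atom in the lattice of weakly exact
structures: any weakly exact structure contained in `𝓔_α` is the split structure or `𝓔_α`
itself. -/
theorem statement18 (k : Type w) [Field k] [Linear k C]
    [∀ X Y : C, FiniteDimensional k (X ⟶ Y)]
    (hKS : ∀ X : C, ∃ (n : ℕ) (f : Fin n → C),
      (∀ j, IsLocalRing (End (f j))) ∧ Nonempty (X ≅ ⨁ f))
    {A B Z : C} (i : A ⟶ B) (d : B ⟶ Z) (hα : IsAlmostSplit i d) :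
    ∃ Eα : WeaklyExactStructure C,
      (∀ {A' B' Z' : C} (i' : A' ⟶ B') (d' : B' ⟶ Z'), Eα.W i' d' ↔ InEAlpha i d i' d') ∧
      ∀ 𝒲 : WeaklyExactStructure C,
        (∀ {A' B' Z' : C} (i' : A' ⟶ B') (d' : B' ⟶ Z'), 𝒲.W i' d' → Eα.W i' d') →
        ((∀ {A' B' Z' : C} (i' : A' ⟶ B') (d' : B' ⟶ Z'), 𝒲.W i' d' ↔ IsSplitPair i' d') ∨
         (∀ {A' B' Z' : C} (i' : A' ⟶ B') (d' : B' ⟶ Z'), 𝒲.W i' d' ↔ Eα.W i' d')) := by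
  exact statement18_general i d hα (hα.2.2.1.hasComplements hKS) (hα.2.2.2.1.hasComplements hKS)

end Statement

end WeaklyExactPaper
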